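/- Let R: [0,∞)² → [0,∞) be continuous, homogeneous of degree 1 (i.e., R(sx,sy) = s·R(x,y) for all s > 0 and x,y ≥ 0), and satisfy R(x,y) ≤ min(x,y). Then for all a, b > 0, the double integral ∫_0^1 ∫_0^1 R(au, bv)/(uv) du dv is finite and equals ∫_0^1 R(au, b)/u du + ∫_0^1 R(a, bv)/v dv. -/

import Mathlib

open MeasureTheory Filter Topology Set

/-!
Write `f (u, v) = R (a u) (b v) / (u v)`, which is homogeneous of degree `-1`. Since
`min x y ≤ √(x y)`, it is dominated by `√(a b) / √(u v)`, so it is integrable on the unit square.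
The diagonal cuts the square into two triangles. On the lower one put `v = u t`: the Jacobian `u`
cancels the factor `u⁻¹` given by homogeneity, the variable `u` integrates out, and `∫ f (1, t) dt`
remains. The upper triangle is the mirror image and gives `∫ f (t, 1) dt`.
-/

section Homogeneous

variable {E : Type*} [NormedAddCommGroup E] [NormedSpace ℝ E] {f : ℝ × ℝ → E} {d : ℝ} {S : Set ℝ}

/-- Positive homogeneity of real degree `d` on the open quadrant `(0, ∞)²`; the values of `f`
elsewhere are irrelevant. -/
def HomogeneousOnQuadrant (d : ℝ) (f : ℝ × ℝ → E) : Prop :=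
  ∀ s > 0, ∀ x > 0, ∀ y > 0, f (s * x, s * y) = s ^ d • f (x, y)

theorem HomogeneousOnQuadrant.comp_swap (hf : HomogeneousOnQuadrant d f) :
    HomogeneousOnQuadrant d (f ∘ Prod.swap) :=
  fun s hs x hx y hy => hf s hs y hy x hx

/-- The points with abscissa in `(0, 1]` whose slope seen from the origin lies in `S`; the two
halves of the unit square on either side of the diagonal are of this form, up to a swap. -/
def sector (S : Set ℝ) : Set (ℝ × ℝ) := {z | z.1 ∈ Ioc 0 1 ∧ z.2 / z.1 ∈ S}

/-- The parametrization `(u, t) ↦ (u, u t)` of sectors by abscissa and slope. -/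
def sectorMap (z : ℝ × ℝ) : ℝ × ℝ := (z.1, z.1 * z.2)

/-- The derivative of `sectorMap`, given by its Jacobian matrix. -/
noncomputable def fderivSectorMap (z : ℝ × ℝ) : ℝ × ℝ →L[ℝ] ℝ × ℝ :=
  (Matrix.toLin (.finTwoProd ℝ) (.finTwoProd ℝ) !![1, 0; z.2, z.1]).toContinuousLinearMap

theorem hasFDerivAt_sectorMap (z : ℝ × ℝ) : HasFDerivAt sectorMap (fderivSectorMap z) z := by
  unfold fderivSectorMap
  rw [Matrix.toLin_finTwoProd_toContinuousLinearMap]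
  have hmul : HasFDerivAt (fun z : ℝ × ℝ => z.1 * z.2)
      (z.1 • ContinuousLinearMap.snd ℝ ℝ ℝ + z.2 • ContinuousLinearMap.fst ℝ ℝ ℝ) z :=
    hasFDerivAt_fst.mul hasFDerivAt_snd
  convert! hasFDerivAt_fst.prodMk hmul using 2 <;> simp [add_comm]

theorem det_fderivSectorMap (z : ℝ × ℝ) : (fderivSectorMap z).det = z.1 := by
  simp [fderivSectorMap]

theorem injOn_sectorMap : InjOn sectorMap (Ioc 0 1 ×ˢ S) := by
  rintro ⟨u, t⟩ ⟨hu, -⟩ ⟨u', t'⟩ - h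
  obtain ⟨rfl, ht⟩ := Prod.mk.inj h
  exact Prod.ext rfl (mul_left_cancel₀ hu.1.ne' ht)

theorem image_sectorMap : sectorMap '' (Ioc 0 1 ×ˢ S) = sector S := by
  ext ⟨u, v⟩
  constructor
  · rintro ⟨⟨u, t⟩, ⟨hu, ht⟩, ⟨⟩⟩
    exact ⟨hu, by rwa [mul_div_cancel_left₀ t hu.1.ne']⟩
  · rintro ⟨hu, hS⟩
    exact ⟨(u, v / u), ⟨hu, hS⟩, Prod.ext rfl (mul_div_cancel₀ v hu.1.ne')⟩

theorem measurableSet_sector (hS : MeasurableSet S) : MeasurableSet (sector S) :=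
  (measurable_fst measurableSet_Ioc).inter ((measurable_snd.div measurable_fst) hS)

theorem setIntegral_Ioc_zero_one_rpow {r : ℝ} (hr : -1 < r) :
    ∫ u in Ioc (0 : ℝ) 1, u ^ r = (r + 1)⁻¹ := by
  rw [← intervalIntegral.integral_of_le zero_le_one, integral_rpow (.inl hr), Real.one_rpow,
    Real.zero_rpow (by linarith), sub_zero, one_div]

theorem HomogeneousOnQuadrant.setIntegral_sector (hf : HomogeneousOnQuadrant d f) (hd : -2 < d)
    (hS : MeasurableSet S) (hS_pos : S ⊆ Ioi 0) :
    ∫ z in sector S, f z = (d + 2)⁻¹ • ∫ t in S, f (1, t) := by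
  have hmeas : MeasurableSet (Ioc (0 : ℝ) 1 ×ˢ S) := measurableSet_Ioc.prod hS
  have hhom : ∀ z ∈ Ioc (0 : ℝ) 1 ×ˢ S,
      |(fderivSectorMap z).det| • f (sectorMap z) = z.1 ^ (d + 1) • f (1, z.2) := by
    rintro ⟨u, t⟩ ⟨hu, ht⟩
    have h := hf u hu.1 1 one_pos t (hS_pos ht)
    rw [mul_one] at h
    rw [det_fderivSectorMap, abs_of_pos hu.1, sectorMap, h, smul_smul, Real.rpow_add_one hu.1.ne',
      mul_comm]
  calc ∫ z in sector S, f z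
      = ∫ z in Ioc (0 : ℝ) 1 ×ˢ S, |(fderivSectorMap z).det| • f (sectorMap z) := by
        rw [← image_sectorMap]
        exact integral_image_eq_integral_abs_det_fderiv_smul volume hmeas
          (fun z _ => (hasFDerivAt_sectorMap z).hasFDerivWithinAt) injOn_sectorMap f
    _ = ∫ z in Ioc (0 : ℝ) 1 ×ˢ S, z.1 ^ (d + 1) • f (1, z.2) :=
        setIntegral_congr_fun hmeas hhom
    _ = (∫ u in Ioc (0 : ℝ) 1, u ^ (d + 1)) • ∫ t in S, f (1, t) := by
        rw [Measure.volume_eq_prod, ← Measure.prod_restrict]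
        exact integral_prod_smul (fun u : ℝ => u ^ (d + 1)) (fun t => f (1, t))
    _ = (d + 2)⁻¹ • ∫ t in S, f (1, t) := by
        rw [setIntegral_Ioc_zero_one_rpow (by linarith), add_assoc, one_add_one_eq_two]

theorem setIntegral_preimage_swap (s : Set (ℝ × ℝ)) (f : ℝ × ℝ → E) :
    ∫ z in Prod.swap ⁻¹' s, f z = ∫ z in s, f z.swap :=
  Measure.measurePreserving_swap.setIntegral_preimage_emb
    MeasurableEquiv.prodComm.measurableEmbedding (f ∘ Prod.swap) s

theorem mem_sector_Ioc_zero_one {u v : ℝ} :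
    (u, v) ∈ sector (Ioc 0 1) ↔ u ∈ Ioc 0 1 ∧ 0 < v ∧ v ≤ u :=
  and_congr_right fun hu => and_congr (div_pos_iff_of_pos_right hu.1) (div_le_one hu.1)

theorem mem_sector_Ioo_zero_one {u v : ℝ} :
    (u, v) ∈ sector (Ioo 0 1) ↔ u ∈ Ioc 0 1 ∧ 0 < v ∧ v < u :=
  and_congr_right fun hu => and_congr (div_pos_iff_of_pos_right hu.1) (div_lt_one hu.1)

theorem sector_Ioc_union_preimage_swap_sector_Ioo :
    sector (Ioc 0 1) ∪ Prod.swap ⁻¹' sector (Ioo 0 1) = Ioc 0 1 ×ˢ Ioc 0 1 := by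
  ext ⟨u, v⟩
  simp only [mem_union, mem_preimage, Prod.swap_prod_mk, mem_sector_Ioc_zero_one,
    mem_sector_Ioo_zero_one, mem_prod, mem_Ioc]
  grind

theorem disjoint_sector_Ioc_preimage_swap_sector_Ioo :
    Disjoint (sector (Ioc 0 1)) (Prod.swap ⁻¹' sector (Ioo 0 1)) :=
  disjoint_left.2 fun _ hlower hupper =>
    (mem_sector_Ioc_zero_one.1 hlower).2.2.not_gt (mem_sector_Ioo_zero_one.1 hupper).2.2

theorem HomogeneousOnQuadrant.setIntegral_Ioc_prod_Ioc (hf : HomogeneousOnQuadrant d f)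
    (hd : -2 < d) (hint : IntegrableOn f (Ioc 0 1 ×ˢ Ioc 0 1)) :
    ∫ z in Ioc 0 1 ×ˢ Ioc 0 1, f z =
      (d + 2)⁻¹ • ((∫ t in Ioc (0 : ℝ) 1, f (t, 1)) + ∫ t in Ioc (0 : ℝ) 1, f (1, t)) := by
  have hlower : ∫ z in sector (Ioc 0 1), f z = (d + 2)⁻¹ • ∫ t in Ioc (0 : ℝ) 1, f (1, t) :=
    hf.setIntegral_sector hd measurableSet_Ioc fun _ ht => ht.1
  have hupper : ∫ z in Prod.swap ⁻¹' sector (Ioo 0 1), f z =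
      (d + 2)⁻¹ • ∫ t in Ioc (0 : ℝ) 1, f (t, 1) := by
    rw [setIntegral_preimage_swap, integral_Ioc_eq_integral_Ioo]
    exact hf.comp_swap.setIntegral_sector hd measurableSet_Ioo fun _ ht => ht.1
  rw [← sector_Ioc_union_preimage_swap_sector_Ioo, integrableOn_union] at hint
  rw [← sector_Ioc_union_preimage_swap_sector_Ioo,
    setIntegral_union disjoint_sector_Ioc_preimage_swap_sector_Ioo
      (measurable_swap (measurableSet_sector measurableSet_Ioo)) hint.1 hint.2,
    hlower, hupper, ← smul_add, add_comm (∫ _ in _, f (1, _))]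

end Homogeneous

theorem min_le_sqrt_mul {x y : ℝ} (hx : 0 ≤ x) (hy : 0 ≤ y) : min x y ≤ √(x * y) :=
  Real.le_sqrt_of_sq_le <| by
    rw [sq]
    exact mul_le_mul (min_le_left x y) (min_le_right x y) (le_min hx hy) hx

theorem integrableOn_inv_sqrt_mul :
    IntegrableOn (fun z : ℝ × ℝ => (√(z.1 * z.2))⁻¹) (Ioc 0 1 ×ˢ Ioc 0 1) := by
  have hrpow : IntegrableOn (fun u : ℝ => u ^ (-(1 / 2) : ℝ)) (Ioc 0 1) := by
    rw [← intervalIntegrable_iff_integrableOn_Ioc_of_le zero_le_one]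
    exact intervalIntegral.intervalIntegrable_rpow' (by norm_num)
  have hsqrt : IntegrableOn (fun u : ℝ => (√u)⁻¹) (Ioc 0 1) :=
    hrpow.congr_fun (fun u hu => by rw [Real.sqrt_eq_rpow, ← Real.rpow_neg hu.1.le])
      measurableSet_Ioc
  have hprod : IntegrableOn (fun z : ℝ × ℝ => (√z.1)⁻¹ * (√z.2)⁻¹) (Ioc 0 1 ×ˢ Ioc 0 1) := by
    rw [IntegrableOn, Measure.volume_eq_prod, ← Measure.prod_restrict]
    exact hsqrt.mul_prod hsqrt
  exact hprod.congr_fun (fun z hz => by rw [Real.sqrt_mul hz.1.1.le, mul_inv])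
    (measurableSet_Ioc.prod measurableSet_Ioc)

theorem aestronglyMeasurable_comp_mul_mul {E : Type*} [TopologicalSpace E] {R : ℝ → ℝ → E} {a b : ℝ}
    (hmeas : AEStronglyMeasurable (fun z : ℝ × ℝ => R z.1 z.2) (volume.restrict (Ioi 0 ×ˢ Ioi 0)))
    (ha : 0 < a) (hb : 0 < b) :
    AEStronglyMeasurable (fun z : ℝ × ℝ => R (a * z.1) (b * z.2))
      (volume.restrict (Ioi 0 ×ˢ Ioi 0)) := by
  have hscale : Measure.QuasiMeasurePreserving (Prod.map (a * ·) (b * ·) : ℝ × ℝ → ℝ × ℝ) :=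
    MeasureTheory.QuasiMeasurePreserving.prodMap
      (Measure.quasiMeasurePreserving_smul volume ha.ne')
      (Measure.quasiMeasurePreserving_smul volume hb.ne')
  exact hmeas.comp_quasiMeasurePreserving
    (hscale.restrict fun z hz => ⟨mul_pos ha hz.1, mul_pos hb hz.2⟩)

section Kernel

variable {E : Type*} [NormedAddCommGroup E] [NormedSpace ℝ E] {R : ℝ → ℝ → E} {a b : ℝ}

theorem homogeneousOnQuadrant_inv_mul_smul
    (hhom : ∀ s > 0, ∀ x > 0, ∀ y > 0, R (s * x) (s * y) = s • R x y) (ha : 0 < a) (hb : 0 < b) :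
    HomogeneousOnQuadrant (-1) fun z => (z.1 * z.2)⁻¹ • R (a * z.1) (b * z.2) := by
  intro s hs x hx y hy
  dsimp only
  rw [mul_left_comm a s x, mul_left_comm b s y, hhom s hs _ (mul_pos ha hx) _ (mul_pos hb hy),
    smul_smul, smul_smul, Real.rpow_neg_one]
  congr 1
  field_simp

theorem norm_inv_mul_smul_le {C u v : ℝ} (hC : ∀ x > 0, ∀ y > 0, ‖R x y‖ ≤ C * √(x * y))
    (ha : 0 < a) (hb : 0 < b) (hu : 0 < u) (hv : 0 < v) :
    ‖(u * v)⁻¹ • R (a * u) (b * v)‖ ≤ C * √(a * b) * (√(u * v))⁻¹ :=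
  calc ‖(u * v)⁻¹ • R (a * u) (b * v)‖
      ≤ (u * v)⁻¹ * (C * √(a * u * (b * v))) := by
        rw [norm_smul, Real.norm_of_nonneg (by positivity)]
        gcongr
        exact hC _ (mul_pos ha hu) _ (mul_pos hb hv)
    _ = C * √(a * b) * (√(u * v) / (u * v)) := by
        rw [mul_mul_mul_comm, Real.sqrt_mul (mul_pos ha hb).le]
        ring
    _ = C * √(a * b) * (√(u * v))⁻¹ := by rw [Real.sqrt_div_self]

theorem integrableOn_inv_mul_smul {C : ℝ}
    (hmeas : AEStronglyMeasurable (fun z : ℝ × ℝ => R z.1 z.2) (volume.restrict (Ioi 0 ×ˢ Ioi 0)))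
    (hC : ∀ x > 0, ∀ y > 0, ‖R x y‖ ≤ C * √(x * y)) (ha : 0 < a) (hb : 0 < b) :
    IntegrableOn (fun z : ℝ × ℝ => (z.1 * z.2)⁻¹ • R (a * z.1) (b * z.2))
      (Ioc 0 1 ×ˢ Ioc 0 1) := by
  have hsub : Ioc (0 : ℝ) 1 ×ˢ Ioc (0 : ℝ) 1 ⊆ Ioi 0 ×ˢ Ioi 0 :=
    prod_mono Ioc_subset_Ioi_self Ioc_subset_Ioi_self
  have hR := (aestronglyMeasurable_comp_mul_mul hmeas ha hb).mono_set hsub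
  have hinv : Measurable fun z : ℝ × ℝ => (z.1 * z.2)⁻¹ := by fun_prop
  refine (integrableOn_inv_sqrt_mul.const_mul (C * √(a * b))).mono'
    (hinv.aestronglyMeasurable.smul hR) ?_
  exact ae_restrict_of_forall_mem (measurableSet_Ioc.prod measurableSet_Ioc)
    fun z hz => norm_inv_mul_smul_le hC ha hb hz.1.1 hz.2.1

theorem tail_copula_double_integral_identity_general [CompleteSpace E] {C : ℝ}
    (hmeas : AEStronglyMeasurable (fun z : ℝ × ℝ => R z.1 z.2) (volume.restrict (Ioi 0 ×ˢ Ioi 0)))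
    (hhom : ∀ s > 0, ∀ x > 0, ∀ y > 0, R (s * x) (s * y) = s • R x y)
    (hC : ∀ x > 0, ∀ y > 0, ‖R x y‖ ≤ C * √(x * y)) (ha : 0 < a) (hb : 0 < b) :
    IntegrableOn (fun z : ℝ × ℝ => (z.1 * z.2)⁻¹ • R (a * z.1) (b * z.2))
      (Ioc 0 1 ×ˢ Ioc 0 1) ∧
    ∫ z in Ioc 0 1 ×ˢ Ioc 0 1, (z.1 * z.2)⁻¹ • R (a * z.1) (b * z.2) =
      (∫ u in Ioc (0 : ℝ) 1, u⁻¹ • R (a * u) b) + ∫ v in Ioc (0 : ℝ) 1, v⁻¹ • R a (b * v) := by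
  have hint := integrableOn_inv_mul_smul hmeas hC ha hb
  refine ⟨hint, ?_⟩
  rw [(homogeneousOnQuadrant_inv_mul_smul hhom ha hb).setIntegral_Ioc_prod_Ioc (by norm_num) hint]
  norm_num

end Kernel

/-- **Key integral identity for homogeneous tail copulas** (used to evaluate
`Cov(Γ_i, Γ_j)` in the proof of Theorem 2 of "The Estimation Risk in Extreme
Systemic Risk Forecasts").

Let `R : [0,∞)² → [0,∞)` be continuous, homogeneous of degree 1 and satisfy
`R(x,y) ≤ min(x,y)`.  Then for all `a, b > 0` the double integral
`∫₀¹∫₀¹ R(au, bv)/(uv) du dv` is finite and equals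
`∫₀¹ R(au, b)/u du + ∫₀¹ R(a, bv)/v dv`. -/
theorem tail_copula_double_integral_identity
    (R : ℝ → ℝ → ℝ)
    (hcont : ContinuousOn (fun z : ℝ × ℝ => R z.1 z.2) (Ici 0 ×ˢ Ici 0))
    (hnonneg : ∀ x y : ℝ, 0 ≤ x → 0 ≤ y → 0 ≤ R x y)
    (hhom : ∀ s > (0 : ℝ), ∀ x y : ℝ, 0 ≤ x → 0 ≤ y → R (s * x) (s * y) = s * R x y)
    (hbound : ∀ x y : ℝ, 0 ≤ x → 0 ≤ y → R x y ≤ min x y)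
    (a b : ℝ) (ha : 0 < a) (hb : 0 < b) :
    IntegrableOn (fun z : ℝ × ℝ => R (a * z.1) (b * z.2) / (z.1 * z.2))
      (Ioc 0 1 ×ˢ Ioc 0 1) volume ∧
    (∫ z : ℝ × ℝ in Ioc 0 1 ×ˢ Ioc 0 1, R (a * z.1) (b * z.2) / (z.1 * z.2))
      = (∫ u in Ioc (0 : ℝ) 1, R (a * u) b / u) + ∫ v in Ioc (0 : ℝ) 1, R a (b * v) / v := by
  have hmeas : AEStronglyMeasurable (fun z : ℝ × ℝ => R z.1 z.2)
      (volume.restrict (Ioi 0 ×ˢ Ioi 0)) :=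
    (hcont.mono (prod_mono Ioi_subset_Ici_self Ioi_subset_Ici_self)).aestronglyMeasurable
      (measurableSet_Ioi.prod measurableSet_Ioi)
  have hnorm : ∀ x > 0, ∀ y > 0, ‖R x y‖ ≤ 1 * √(x * y) := fun x hx y hy => by
    rw [Real.norm_of_nonneg (hnonneg x y hx.le hy.le), one_mul]
    exact (hbound x y hx.le hy.le).trans (min_le_sqrt_mul hx.le hy.le)
  simpa only [smul_eq_mul, inv_mul_eq_div] using tail_copula_double_integral_identity_general hmeas
    (fun s hs x hx y hy => hhom s hs x y hx.le hy.le) hnorm ha hb
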